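/- arXiv:2409.10979 — 2 statements merged into one kernel-verified Lean document; each statement's English description precedes it below -/
import Mathlib

section
/- Let C ⊆ 𝔽₂ⁿ be a nonzero binary linear code whose minimum Hamming distance satisfies d_H(C) < n. Then d_H(C) + 1 ≤ d_sp(C) ≤ 2·d_H(C), where d_H(C) and d_sp(C) denote respectively the minimum Hamming weight and the minimum symbol-pair weight over all nonzero codewords of C. -/
/-- Hamming weight of a binary vector. -/
def wtH {n : ℕ} (x : Fin n → ZMod 2) : ℕ :=
  (Finset.univ.filter fun i => x i ≠ 0).card

/-- Symbol-pair weight of a binary vector (indices mod n). -/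
def wtSp {n : ℕ} [NeZero n] (x : Fin n → ZMod 2) : ℕ :=
  (Finset.univ.filter fun i => (x i, x (i + 1)) ≠ (0, 0)).card

/-- Symplectic weight of a pair (a | b). -/
def wtSymp {n : ℕ} (a b : Fin n → ZMod 2) : ℕ :=
  (Finset.univ.filter fun i => (a i, b i) ≠ (0, 0)).card

/-- Left cyclic shift: (c₀, c₁, …, c_{n−1}) ↦ (c₁, …, c_{n−1}, c₀). -/
def L {n : ℕ} [NeZero n] (c : Fin n → ZMod 2) : Fin n → ZMod 2 :=
  fun i => c (i + 1)

/-- Right cyclic shift: (a₀, a₁, …, a_{n−1}) ↦ (a_{n−1}, a₀, …, a_{n−2}). -/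
def R {n : ℕ} [NeZero n] (a : Fin n → ZMod 2) : Fin n → ZMod 2 :=
  fun i => a (i - 1)

/-- Minimum Hamming distance of a code: min Hamming weight of a nonzero codeword. -/
noncomputable def dH {n : ℕ} (C : Submodule (ZMod 2) (Fin n → ZMod 2)) : ℕ :=
  sInf (wtH '' {x | x ∈ C ∧ x ≠ 0})

/-- Minimum symbol-pair distance of a code: min symbol-pair weight of a nonzero codeword. -/
noncomputable def dSp {n : ℕ} [NeZero n] (C : Submodule (ZMod 2) (Fin n → ZMod 2)) : ℕ :=
  sInf (wtSp '' {x | x ∈ C ∧ x ≠ 0})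

/-- The dual code w.r.t. the standard bilinear form ⟨x, y⟩ = ∑ i, x i * y i. -/
def dualCode {n : ℕ} (C : Submodule (ZMod 2) (Fin n → ZMod 2)) :
    Submodule (ZMod 2) (Fin n → ZMod 2) where
  carrier := {x | ∀ y ∈ C, ∑ i, x i * y i = 0}
  add_mem' := by
    intro a b ha hb y hy
    simp only [Pi.add_apply, add_mul, Finset.sum_add_distrib, ha y hy, hb y hy, add_zero]
  zero_mem' := by
    intro y hy
    simp
  smul_mem' := by
    intro c a ha y hy
    simp only [Pi.smul_apply, smul_eq_mul, mul_assoc, ← Finset.mul_sum, ha y hy, mul_zero]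

/-- A linear code is cyclic if it is closed under cyclic shifts. -/
def IsCyclicCode {n : ℕ} [NeZero n] (C : Submodule (ZMod 2) (Fin n → ZMod 2)) : Prop :=
  ∀ x ∈ C, R x ∈ C

/-!
A nonzero coordinate of a word `x` lies in at most two adjacent pairs, which gives the upper bound.
For the lower bound, the pair at `i` is nonzero whenever `x i` is, and if `x` is neither zero nor of
full weight, then somewhere along the cycle a zero coordinate is followed by a nonzero one, so that
the pair there is counted in addition.
-/

section Cycle

variable {ι : Type*} {σ : Equiv.Perm ι}

theorem isCycleOn_univ_finRotate (n : ℕ) : (finRotate n).IsCycleOn Set.univ := by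
  refine ⟨Set.bijOn_univ.mpr (finRotate n).bijective, fun i _ j _ => ?_⟩
  have : NeZero n := i.neZero
  refine ⟨(j - i : Fin n).val, ?_⟩
  rw [zpow_natCast, Equiv.Perm.coe_pow, ← finCycle_eq_finRotate_iterate, finCycle_apply,
    add_sub_cancel]

theorem exists_mem_apply_notMem_of_isCycleOn_univ [Finite ι] (hσ : σ.IsCycleOn Set.univ)
    {s : Set ι} (hs : s.Nonempty) (hs' : s ≠ Set.univ) : ∃ i ∈ s, σ i ∉ s := by
  by_contra! hmaps
  obtain ⟨i, hi⟩ := hs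
  refine hs' (Set.eq_univ_of_forall fun j => ?_)
  obtain ⟨k, rfl⟩ := (hσ.2 (Set.mem_univ i) (Set.mem_univ j)).exists_nat_pow_eq
  rw [Equiv.Perm.coe_pow]
  exact Set.MapsTo.iterate hmaps k hi

end Cycle

section Weight

variable {ι M : Type*} [Fintype ι] [Zero M] [DecidableEq M]

theorem hammingNorm_comp_equiv {κ : Type*} [Fintype κ] (x : ι → M) (e : κ ≃ ι) :
    hammingNorm (x ∘ e) = hammingNorm x :=
  Finset.card_equiv e fun i => by simp

theorem hammingNorm_lt_card_iff {x : ι → M} :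
    hammingNorm x < Fintype.card ι ↔ ∃ i, x i = 0 := by
  simp [hammingNorm, Finset.card_lt_iff_ne_univ, Finset.filter_eq_self]

/-- The symbol-pair weight of the word `x`: the number of nonzero pairs of consecutive letters. The
successor of a position is given by a permutation `σ`, which is `finRotate n` for words of length
`n` read cyclically. -/
def symbolPairWeight (σ : Equiv.Perm ι) (x : ι → M) : ℕ :=
  hammingNorm fun i => (x i, x (σ i))

theorem symbolPairWeight_le_two_mul_hammingNorm (σ : Equiv.Perm ι) (x : ι → M) :
    symbolPairWeight σ x ≤ 2 * hammingNorm x := by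
  classical
  calc symbolPairWeight σ x
      ≤ (Finset.univ.filter (x · ≠ 0) ∪ Finset.univ.filter ((x ∘ σ) · ≠ 0)).card :=
        Finset.card_le_card fun i => by simp [← not_and_or]
    _ ≤ hammingNorm x + hammingNorm (x ∘ σ) := Finset.card_union_le _ _
    _ = 2 * hammingNorm x := by rw [hammingNorm_comp_equiv, two_mul]

theorem hammingNorm_le_symbolPairWeight (σ : Equiv.Perm ι) (x : ι → M) :
    hammingNorm x ≤ symbolPairWeight σ x :=
  hammingNorm_comp_le_hammingNorm (fun _ => Prod.fst) (x := fun i => (x i, x (σ i))) fun _ => rfl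

theorem hammingNorm_lt_symbolPairWeight {σ : Equiv.Perm ι} (hσ : σ.IsCycleOn Set.univ)
    {x : ι → M} (hx : x ≠ 0) (hcard : hammingNorm x < Fintype.card ι) :
    hammingNorm x < symbolPairWeight σ x := by
  have hzero : {i | x i = 0}.Nonempty := hammingNorm_lt_card_iff.mp hcard
  have hne : {i | x i = 0} ≠ Set.univ := fun h => hx (funext (Set.eq_univ_iff_forall.mp h))
  obtain ⟨i, hi, hσi⟩ := exists_mem_apply_notMem_of_isCycleOn_univ hσ hzero hne
  refine Finset.card_lt_card (Finset.ssubset_iff_of_subset ?_ |>.mpr ⟨i, ?_, ?_⟩)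
  · exact fun j => by simp +contextual
  · exact Finset.mem_filter_univ _ |>.mpr fun hpair => hσi (Prod.ext_iff.mp hpair).2
  · simpa using hi

end Weight

section MinWeight

variable {V : Type*} [Zero V] {w : V → ℕ} {C : Set V}

/-- The minimum of the weight `w` over the nonzero words of the code `C`, with value `0` if there
are none. -/
noncomputable def minWeight (w : V → ℕ) (C : Set V) : ℕ :=
  sInf (w '' (C \ {0}))

theorem minWeight_le {x : V} (hx : x ∈ C \ {0}) : minWeight w C ≤ w x :=
  Nat.sInf_le (Set.mem_image_of_mem w hx)

theorem exists_eq_minWeight (hC : (C \ {0}).Nonempty) : ∃ x ∈ C \ {0}, w x = minWeight w C :=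
  Nat.sInf_mem (hC.image w)

end MinWeight

theorem wtSp_eq_symbolPairWeight {n : ℕ} [NeZero n] :
    wtSp (n := n) = symbolPairWeight (finRotate n) := by
  ext x
  simp only [wtSp, symbolPairWeight, hammingNorm, finRotate_apply, Prod.mk_zero_zero]

theorem dH_eq_minWeight {n : ℕ} (C : Submodule (ZMod 2) (Fin n → ZMod 2)) :
    dH C = minWeight hammingNorm (C : Set (Fin n → ZMod 2)) :=
  rfl

theorem dSp_eq_minWeight {n : ℕ} [NeZero n] (C : Submodule (ZMod 2) (Fin n → ZMod 2)) :
    dSp C = minWeight (symbolPairWeight (finRotate n)) (C : Set (Fin n → ZMod 2)) := by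
  rw [← wtSp_eq_symbolPairWeight]
  rfl

theorem dH_add_one_le_dSp_le_two_mul_dH_general {ι M : Type*} [Fintype ι] [Zero M]
    [DecidableEq M] {σ : Equiv.Perm ι} (hσ : σ.IsCycleOn Set.univ) {C : Set (ι → M)}
    (hC : (C \ {0}).Nonempty) (hd : minWeight hammingNorm C < Fintype.card ι) :
    minWeight hammingNorm C + 1 ≤ minWeight (symbolPairWeight σ) C ∧
      minWeight (symbolPairWeight σ) C ≤ 2 * minWeight hammingNorm C := by
  constructor
  · obtain ⟨x, hx, hxw⟩ := exists_eq_minWeight (w := symbolPairWeight σ) hC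
    rw [Nat.add_one_le_iff, ← hxw]
    rcases lt_or_ge (hammingNorm x) (Fintype.card ι) with hlt | hfull
    · exact (minWeight_le hx).trans_lt (hammingNorm_lt_symbolPairWeight hσ hx.2 hlt)
    · exact hd.trans_le (hfull.trans (hammingNorm_le_symbolPairWeight σ x))
  · obtain ⟨y, hy, hyw⟩ := exists_eq_minWeight (w := hammingNorm) hC
    calc minWeight (symbolPairWeight σ) C
        ≤ symbolPairWeight σ y := minWeight_le hy
      _ ≤ 2 * hammingNorm y := symbolPairWeight_le_two_mul_hammingNorm σ y
      _ = 2 * minWeight hammingNorm C := by rw [hyw]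

/-- for a nonzero code C with d_H(C) < n, d_H(C) + 1 ≤ d_sp(C) ≤ 2·d_H(C). -/
theorem dH_add_one_le_dSp_le_two_mul_dH (n : ℕ) [NeZero n]
    (C : Submodule (ZMod 2) (Fin n → ZMod 2)) (hC : C ≠ ⊥) (hd : dH C < n) :
    dH C + 1 ≤ dSp C ∧ dSp C ≤ 2 * dH C := by
  rw [dH_eq_minWeight] at hd ⊢
  rw [dSp_eq_minWeight]
  exact dH_add_one_le_dSp_le_two_mul_dH_general (isCycleOn_univ_finRotate n)
    (Submodule.exists_mem_ne_zero_of_ne_bot hC) (by rwa [Fintype.card_fin])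
end

section
/- Let C₁ and C₂ be binary linear codes of length n with C₂ ⊆ C₁ (so C₁^⊥ ⊆ C₂^⊥). Then every pair (a | b) ∈ 𝔽₂ⁿ × 𝔽₂ⁿ with a ∈ C₂^⊥ and b ∈ C₁ which does NOT satisfy both a ∈ C₁^⊥ and b ∈ C₂ has symplectic weight wt_symp(a | b) ≥ min{d_H(C₁), d_H(C₂^⊥)}. (This is the classical content of the CSS construction: the minimum symplectic weight of S^⊥_symp \ S, where S = C₁^⊥ × C₂, is at least min{d_H(C₁), d_H(C₂^⊥)}.) -/
theorem wtH_le_wtSymp_left {n : ℕ} (a b : Fin n → ZMod 2) : wtH a ≤ wtSymp a b := by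
  refine Finset.card_le_card (Finset.monotone_filter_right _ fun i _ hai habi => ?_)
  exact hai (congrArg Prod.fst habi)

theorem wtH_le_wtSymp_right {n : ℕ} (a b : Fin n → ZMod 2) : wtH b ≤ wtSymp a b := by
  refine Finset.card_le_card (Finset.monotone_filter_right _ fun i _ hbi habi => ?_)
  exact hbi (congrArg Prod.snd habi)

theorem dH_le_wtH {n : ℕ} {C : Submodule (ZMod 2) (Fin n → ZMod 2)} {x : Fin n → ZMod 2}
    (hx : x ∈ C) (hx₀ : x ≠ 0) : dH C ≤ wtH x :=
  Nat.sInf_le (Set.mem_image_of_mem wtH ⟨hx, hx₀⟩)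

theorem css_min_symplectic_weight_general {n : ℕ}
    {C D : Submodule (ZMod 2) (Fin n → ZMod 2)} {a b : Fin n → ZMod 2}
    (ha : a ∈ D) (hb : b ∈ C) (hab : a ≠ 0 ∨ b ≠ 0) :
    min (dH C) (dH D) ≤ wtSymp a b := by
  rcases hab with ha₀ | hb₀
  · exact min_le_of_right_le ((dH_le_wtH ha ha₀).trans (wtH_le_wtSymp_left a b))
  · exact min_le_of_left_le ((dH_le_wtH hb hb₀).trans (wtH_le_wtSymp_right a b))

/-- CSS construction: if C₂ ⊆ C₁, then every (a | b) with a ∈ C₂^⊥, b ∈ C₁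
not satisfying both a ∈ C₁^⊥ and b ∈ C₂ has wt_symp(a|b) ≥ min{d_H(C₁), d_H(C₂^⊥)}. -/
theorem css_min_symplectic_weight (n : ℕ)
    (C₁ C₂ : Submodule (ZMod 2) (Fin n → ZMod 2)) (h : C₂ ≤ C₁)
    (a b : Fin n → ZMod 2) (ha : a ∈ dualCode C₂) (hb : b ∈ C₁)
    (hnot : ¬(a ∈ dualCode C₁ ∧ b ∈ C₂)) :
    min (dH C₁) (dH (dualCode C₂)) ≤ wtSymp a b := by
  refine css_min_symplectic_weight_general ha hb (not_and_or.mp ?_)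
  exact fun ⟨ha₀, hb₀⟩ => hnot ⟨ha₀ ▸ zero_mem _, hb₀ ▸ zero_mem _⟩
end
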